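/- (Bakry–Émery logarithmic Sobolev inequality under strong convexity.) Let m ∈ ℕ, K > 0, and let H : ℝ^m → ℝ be twice continuously differentiable with ⟨v, D²H(x) v⟩ ≥ K‖v‖² for all x, v ∈ ℝ^m, and with ∫_{ℝ^m} e^{−H(x)} dx < ∞. Let μ be the probability measure on ℝ^m with density e^{−H}/∫e^{−H} with respect to Lebesgue measure. Then for every smooth compactly supported f : ℝ^m → ℝ with ∫ f² dμ = 1, one has ∫ f² log(f²) dμ ≤ (2/K) ∫ ‖∇f‖² dμ. -/

import Mathlib

open MeasureTheory

noncomputable section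

/-!
The inequality is extracted from the Prékopa–Leindler inequality, following Bobkov and Ledoux.
Prékopa–Leindler passes from `ℝ` to products, hence to Lebesgue measure on `ℝ^m`, and a strongly
convex potential `H` adds a Gaussian gain `exp (t * s * K / 2 * ‖x - y‖ ^ 2)` to it. For a smooth
bounded `g` take `u = exp g` and `v = 1`, with weights `t = 1 - s` and `s`. Optimizing
`t * g x` over all `x` with `t • x + s • y = z` against the gain costs
`s / (2 * K) * ‖∇g z‖ ^ 2` up to `o(s)`, so that
`(∫ exp g dμ) ^ (1 - s) ≤ ∫ exp ((1 - s) * g + s / (2 * K) * ‖∇g‖ ^ 2 + o(s)) dμ`. There is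
equality at `s = 0`; comparing derivatives there gives the logarithmic Sobolev inequality for
`exp g`. It remains to take `g = log (f ^ 2 + ε)` and let `ε → 0`.
-/

open Set Filter Topology
open scoped ENNReal NNReal Pointwise

/-! ### One-dimensional Brunn–Minkowski and Prékopa–Leindler inequalities -/

lemma volume_add_volume_le_of_isCompact {A B : Set ℝ} (hA : IsCompact A) (hB : IsCompact B)
    (hA₀ : A.Nonempty) (hB₀ : B.Nonempty) : volume A + volume B ≤ volume (A + B) := by
  obtain ⟨a, ha, ha_max⟩ := hA.exists_isGreatest hA₀
  obtain ⟨b, hb, hb_min⟩ := hB.exists_isLeast hB₀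
  have hdisj : AEDisjoint volume (b +ᵥ A) (a +ᵥ B) := by
    refine measure_mono_null (t := {a + b}) ?_ (by simp)
    rintro _ ⟨⟨x, hx, rfl⟩, ⟨y, hy, hxy⟩⟩
    simp only [vadd_eq_add, mem_singleton_iff] at hxy ⊢
    linarith [ha_max hx, hb_min hy]
  calc volume A + volume B = volume ((b +ᵥ A) ∪ (a +ᵥ B)) := by
        rw [measure_union₀ (hB.vadd a).measurableSet.nullMeasurableSet hdisj, measure_vadd,
          measure_vadd]
    _ ≤ volume (A + B) := by
        gcongr
        rintro _ (⟨x, hx, rfl⟩ | ⟨y, hy, rfl⟩)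
        · exact ⟨x, hx, b, hb, add_comm x b⟩
        · exact ⟨a, ha, y, hy, rfl⟩

theorem volume_add_volume_le {A B : Set ℝ} (hA : MeasurableSet A) (hB : MeasurableSet B)
    (hA₀ : A.Nonempty) (hB₀ : B.Nonempty) : volume A + volume B ≤ volume (A + B) := by
  obtain ⟨a, ha⟩ := hA₀
  obtain ⟨b, hb⟩ := hB₀
  rw [hA.measure_eq_iSup_isCompact, hB.measure_eq_iSup_isCompact]
  simp only [iSup_and']
  refine ENNReal.biSup_add_biSup_le' ⟨∅, by simp⟩ ⟨∅, by simp⟩ ?_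
  rintro C ⟨hCA, hC⟩ D ⟨hDB, hD⟩
  calc volume C + volume D ≤ volume (insert a C) + volume (insert b D) := by
        gcongr <;> exact subset_insert _ _
    _ ≤ volume (insert a C + insert b D) :=
        volume_add_volume_le_of_isCompact (hC.insert a) (hD.insert b) (insert_nonempty _ _)
          (insert_nonempty _ _)
    _ ≤ volume (A + B) := by
        gcongr
        exacts [insert_subset ha hCA, insert_subset hb hDB]

lemma measurable_measure_ofReal_lt {α : Type*} [MeasurableSpace α] (μ : Measure α)
    (g : α → ℝ≥0∞) : Measurable fun r : ℝ => μ {a | ENNReal.ofReal r < g a} :=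
  Antitone.measurable fun _ _ hr =>
    measure_mono fun _ ha => (ENNReal.ofReal_le_ofReal hr).trans_lt ha

lemma lintegral_eq_lintegral_measure_ofReal_lt {α : Type*} [MeasurableSpace α] (μ : Measure α)
    {g : α → ℝ≥0∞} (hg : Measurable g) (hg_top : ∀ a, g a ≠ ∞) :
    ∫⁻ a, g a ∂μ = ∫⁻ r in Ioi (0 : ℝ), μ {a | ENNReal.ofReal r < g a} := by
  have hlayer := lintegral_eq_lintegral_meas_lt μ
    (Eventually.of_forall fun a => (g a).toReal_nonneg) hg.ennreal_toReal.aemeasurable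
  simp only [ENNReal.ofReal_toReal (hg_top _)] at hlayer
  refine hlayer.trans (setLIntegral_congr_fun measurableSet_Ioi fun r hr => ?_)
  simp only [ENNReal.ofReal_lt_iff_lt_toReal (mem_Ioi.1 hr).le (hg_top _)]

lemma volume_superlevel_add_le {t s : ℝ} (ht : 0 < t) (hs : 0 < s) (hts : t + s = 1)
    {u v w : ℝ → ℝ≥0∞} (hu : Measurable u) (hv : Measurable v)
    (h : ∀ x y, u x ^ t * v y ^ s ≤ w (t • x + s • y)) {c : ℝ≥0∞}
    (hcu : c < ⨆ x, u x) (hcv : c < ⨆ x, v x) :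
    ENNReal.ofReal t * volume {x | c < u x} + ENNReal.ofReal s * volume {x | c < v x} ≤
      volume {x | c < w x} := by
  have hscale : ∀ {r : ℝ}, 0 < r → ∀ A : Set ℝ, ENNReal.ofReal r * volume A = volume (r • A) :=
    fun hr A => by simp [Measure.addHaar_smul, abs_of_pos hr]
  rw [hscale ht, hscale hs]
  refine (volume_add_volume_le ((measurableSet_lt measurable_const hu).const_smul₀ t)
    ((measurableSet_lt measurable_const hv).const_smul₀ s) (smul_set_nonempty.2 (lt_iSup_iff.1 hcu))
    (smul_set_nonempty.2 (lt_iSup_iff.1 hcv))).trans (measure_mono ?_)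
  rintro _ ⟨_, ⟨x, hx, rfl⟩, _, ⟨y, hy, rfl⟩, rfl⟩
  calc c = c ^ t * c ^ s := by rw [← ENNReal.rpow_add_of_nonneg _ _ ht.le hs.le, hts,
        ENNReal.rpow_one]
    _ < u x ^ t * v y ^ s :=
        ENNReal.mul_lt_mul (ENNReal.rpow_lt_rpow hx ht) (ENNReal.rpow_lt_rpow hy hs)
    _ ≤ w (t • x + s • y) := h x y

-- Equal suprema make the superlevel sets of `u` and `v` nonempty at exactly the same heights, as
-- the one-dimensional Brunn–Minkowski inequality requires.
lemma lintegral_add_lintegral_le_of_iSup_eq_one {t s : ℝ} (ht : 0 < t) (hs : 0 < s)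
    (hts : t + s = 1) {u v w : ℝ → ℝ≥0∞} (hu : Measurable u) (hv : Measurable v)
    (hw : Measurable w) (hu_sup : ⨆ x, u x = 1) (hv_sup : ⨆ x, v x = 1)
    (h : ∀ x y, u x ^ t * v y ^ s ≤ w (t • x + s • y)) :
    ENNReal.ofReal t * (∫⁻ x, u x) + ENNReal.ofReal s * (∫⁻ x, v x) ≤ ∫⁻ x, w x := by
  have hu_le : ∀ x, u x ≤ 1 := fun x => hu_sup ▸ le_iSup u x
  have hv_le : ∀ x, v x ≤ 1 := fun x => hv_sup ▸ le_iSup v x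
  have ne_top : ∀ {c : ℝ≥0∞}, c ≤ 1 → c ≠ ∞ := ne_top_of_le_ne_top ENNReal.one_ne_top
  have hmin : ∀ x y, u x ^ t * v y ^ s ≤ min (w (t • x + s • y)) 1 := fun x y =>
    le_min (h x y) (mul_le_one' (ENNReal.rpow_le_one (hu_le x) ht.le)
      (ENNReal.rpow_le_one (hv_le y) hs.le))
  refine le_trans ?_ (lintegral_mono fun x => min_le_left (w x) 1)
  rw [lintegral_eq_lintegral_measure_ofReal_lt _ hu fun x => ne_top (hu_le x),
    lintegral_eq_lintegral_measure_ofReal_lt _ hv fun x => ne_top (hv_le x),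
    lintegral_eq_lintegral_measure_ofReal_lt _ (hw.min measurable_const)
      fun x => ne_top (min_le_right _ _),
    ← lintegral_const_mul _ (measurable_measure_ofReal_lt _ u),
    ← lintegral_const_mul _ (measurable_measure_ofReal_lt _ v),
    ← lintegral_add_left ((measurable_measure_ofReal_lt _ u).const_mul _)]
  refine setLIntegral_mono' measurableSet_Ioi fun r _ => ?_
  rcases lt_or_ge (ENNReal.ofReal r) 1 with hr | hr
  · exact volume_superlevel_add_le ht hs hts hu hv hmin (hu_sup ▸ hr) (hv_sup ▸ hr)
  · simp [((hu_le _).trans hr).not_gt, ((hv_le _).trans hr).not_gt]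

lemma ennreal_rpow_mul_rpow_le_add {t s : ℝ} (ht : 0 < t) (hs : 0 < s) (hts : t + s = 1)
    (a b : ℝ≥0∞) : a ^ t * b ^ s ≤ ENNReal.ofReal t * a + ENNReal.ofReal s * b := by
  have hconj : (t⁻¹).HolderConjugate s⁻¹ :=
    Real.holderConjugate_iff.2 ⟨(one_lt_inv₀ ht).2 (by linarith), by simpa using hts⟩
  have hyoung := ENNReal.young_inequality (a ^ t) (b ^ s) hconj
  simp only [← ENNReal.rpow_mul, mul_inv_cancel₀ ht.ne', mul_inv_cancel₀ hs.ne',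
    ENNReal.rpow_one, ENNReal.ofReal_inv_of_pos ht, ENNReal.ofReal_inv_of_pos hs,
    div_eq_mul_inv, inv_inv] at hyoung
  rwa [mul_comm _ a, mul_comm _ b]

lemma prekopa_leindler_real_of_iSup_ne_top {t s : ℝ} (ht : 0 < t) (hs : 0 < s)
    (hts : t + s = 1) {u v w : ℝ → ℝ≥0∞} (hu : Measurable u) (hv : Measurable v)
    (hw : Measurable w) (hu_sup : ⨆ x, u x ≠ ∞) (hv_sup : ⨆ x, v x ≠ ∞)
    (h : ∀ x y, u x ^ t * v y ^ s ≤ w (t • x + s • y)) :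
    (∫⁻ x, u x) ^ t * (∫⁻ x, v x) ^ s ≤ ∫⁻ x, w x := by
  set M := ⨆ x, u x
  set N := ⨆ x, v x
  rcases eq_or_ne M 0 with hM | hM
  · simp [ENNReal.iSup_eq_zero.1 hM, ht]
  rcases eq_or_ne N 0 with hN | hN
  · simp [ENNReal.iSup_eq_zero.1 hN, hs]
  have hinv : ∀ a b : ℝ≥0∞, (M⁻¹ * a) ^ t * (N⁻¹ * b) ^ s = (M ^ t * N ^ s)⁻¹ * (a ^ t * b ^ s) :=
    fun a b => by
      rw [ENNReal.mul_rpow_of_nonneg _ _ ht.le, ENNReal.mul_rpow_of_nonneg _ _ hs.le,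
        mul_mul_mul_comm, ENNReal.inv_rpow, ENNReal.inv_rpow,
        ENNReal.mul_inv (by simp [hM, hu_sup]) (by simp [hM, hu_sup])]
  have hnormalized : (M ^ t * N ^ s)⁻¹ * ((∫⁻ x, u x) ^ t * (∫⁻ x, v x) ^ s) ≤
      (M ^ t * N ^ s)⁻¹ * ∫⁻ x, w x := by
    rw [← hinv, ← lintegral_const_mul _ hu, ← lintegral_const_mul _ hv, ← lintegral_const_mul _ hw]
    refine (ennreal_rpow_mul_rpow_le_add ht hs hts _ _).trans
      (lintegral_add_lintegral_le_of_iSup_eq_one ht hs hts (hu.const_mul _) (hv.const_mul _)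
        (hw.const_mul _) ?_ ?_ fun x y => ?_)
    · rw [← ENNReal.mul_iSup, ENNReal.inv_mul_cancel hM hu_sup]
    · rw [← ENNReal.mul_iSup, ENNReal.inv_mul_cancel hN hv_sup]
    · rw [hinv]
      gcongr
      exact h x y
  exact (ENNReal.mul_le_mul_iff_right (by simp [ENNReal.mul_eq_top, *]) (by simp [*])).1 hnormalized

lemma tendsto_lintegral_min_natCast {α : Type*} [MeasurableSpace α] (μ : Measure α)
    {g : α → ℝ≥0∞} (hg : Measurable g) :
    Tendsto (fun n : ℕ => ∫⁻ a, min (g a) n ∂μ) atTop (𝓝 (∫⁻ a, g a ∂μ)) := by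
  refine lintegral_tendsto_of_tendsto_of_monotone
    (fun n => (hg.min measurable_const).aemeasurable)
    (Eventually.of_forall fun a n m hnm => min_le_min_left _ (by exact_mod_cast hnm))
    (Eventually.of_forall fun a => ?_)
  simpa using (tendsto_const_nhds (x := g a)).min ENNReal.tendsto_nat_nhds_top

theorem prekopa_leindler_real {t s : ℝ} (ht : 0 < t) (hs : 0 < s) (hts : t + s = 1)
    {u v w : ℝ → ℝ≥0∞} (hu : Measurable u) (hv : Measurable v) (hw : Measurable w)
    (h : ∀ x y, u x ^ t * v y ^ s ≤ w (t • x + s • y)) :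
    (∫⁻ x, u x) ^ t * (∫⁻ x, v x) ^ s ≤ ∫⁻ x, w x := by
  rcases eq_or_ne (∫⁻ x, u x) 0 with hu₀ | hu₀
  · simp [hu₀, ht]
  rcases eq_or_ne (∫⁻ x, v x) 0 with hv₀ | hv₀
  · simp [hv₀, hs]
  have hlim := ENNReal.Tendsto.mul
    ((tendsto_lintegral_min_natCast volume hu).ennrpow_const t) (by simp [hu₀, ht.not_gt])
    ((tendsto_lintegral_min_natCast volume hv).ennrpow_const s) (by simp [hv₀, hs.not_gt])
  have iSup_min_ne_top : ∀ (g : ℝ → ℝ≥0∞) (n : ℕ), ⨆ x, min (g x) n ≠ ∞ := fun g n =>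
    ne_top_of_le_ne_top (ENNReal.natCast_ne_top n) (iSup_le fun x => min_le_right _ _)
  refine le_of_tendsto' hlim fun n => prekopa_leindler_real_of_iSup_ne_top ht hs hts
    (hu.min measurable_const) (hv.min measurable_const) hw (iSup_min_ne_top u n)
    (iSup_min_ne_top v n) fun x y => le_trans ?_ (h x y)
  gcongr <;> exact min_le_left _ _

/-! ### Measures satisfying a Prékopa–Leindler inequality -/

/-- The Prékopa–Leindler inequality for `μ` with curvature `K`. For `K = 0` this is the classical
inequality; a positive `K` weakens the assumption on `u, v, w` by the factor
`exp (t * s * K / 2 * ‖x - y‖ ^ 2)`, which is what a `K`-strongly convex potential provides. -/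
def PrekopaLeindler {E : Type*} [NormedAddCommGroup E] [NormedSpace ℝ E] [MeasurableSpace E]
    (K : ℝ) (μ : Measure E) : Prop :=
  ∀ ⦃t s : ℝ⦄, 0 < t → 0 < s → t + s = 1 → ∀ ⦃u v w : E → ℝ≥0∞⦄,
    Measurable u → Measurable v → Measurable w →
    (∀ x y, u x ^ t * v y ^ s ≤
      ENNReal.ofReal (Real.exp (t * s * (K / 2 * ‖x - y‖ ^ 2))) * w (t • x + s • y)) →
    (∫⁻ x, u x ∂μ) ^ t * (∫⁻ x, v x ∂μ) ^ s ≤ ∫⁻ x, w x ∂μ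

lemma exp_neg_div_rpow_mul_rpow_le_of_strongConvexOn {E : Type*} [NormedAddCommGroup E]
    [NormedSpace ℝ E] {K : ℝ} {H : E → ℝ} (hH : StrongConvexOn univ K H) {t s : ℝ} (ht : 0 ≤ t)
    (hs : 0 ≤ s) (hts : t + s = 1) {Z : ℝ} (hZ : 0 ≤ Z) (x y : E) :
    (Real.exp (-H x) / Z) ^ t * (Real.exp (-H y) / Z) ^ s ≤
      Real.exp (-(t * s * (K / 2 * ‖x - y‖ ^ 2))) * (Real.exp (-H (t • x + s • y)) / Z) := by
  have hconv := hH.2 (mem_univ x) (mem_univ y) ht hs hts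
  simp only [smul_eq_mul] at hconv
  rw [Real.div_rpow (Real.exp_pos _).le hZ, Real.div_rpow (Real.exp_pos _).le hZ,
    div_mul_div_comm, ← Real.rpow_add_of_nonneg hZ ht hs, hts, Real.rpow_one, ← Real.exp_mul,
    ← Real.exp_mul, ← Real.exp_add, ← mul_div_assoc, ← Real.exp_add]
  refine div_le_div_of_nonneg_right (Real.exp_le_exp.2 ?_) hZ
  linarith

section PrekopaLeindler

variable {E F : Type*} [NormedAddCommGroup E] [NormedSpace ℝ E] [MeasurableSpace E]
  [NormedAddCommGroup F] [NormedSpace ℝ F] [MeasurableSpace F]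

lemma prekopaLeindler_zero_iff {μ : Measure E} :
    PrekopaLeindler 0 μ ↔ ∀ ⦃t s : ℝ⦄, 0 < t → 0 < s → t + s = 1 → ∀ ⦃u v w : E → ℝ≥0∞⦄,
      Measurable u → Measurable v → Measurable w →
      (∀ x y, u x ^ t * v y ^ s ≤ w (t • x + s • y)) →
      (∫⁻ x, u x ∂μ) ^ t * (∫⁻ x, v x ∂μ) ^ s ≤ ∫⁻ x, w x ∂μ := by
  simp [PrekopaLeindler]

lemma prekopaLeindler_volume_real : PrekopaLeindler 0 (volume : Measure ℝ) :=
  prekopaLeindler_zero_iff.2 fun _ _ ht hs hts _ _ _ => prekopa_leindler_real ht hs hts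

theorem PrekopaLeindler.prod {μ : Measure E} {ν : Measure F} [SFinite ν]
    (hμ : PrekopaLeindler 0 μ) (hν : PrekopaLeindler 0 ν) : PrekopaLeindler 0 (μ.prod ν) := by
  rw [prekopaLeindler_zero_iff] at *
  intro t s ht hs hts u v w hu hv hw h
  rw [lintegral_prod _ hu.aemeasurable, lintegral_prod _ hv.aemeasurable,
    lintegral_prod _ hw.aemeasurable]
  exact hμ ht hs hts hu.lintegral_prod_right' hv.lintegral_prod_right' hw.lintegral_prod_right'
    fun x y => hν ht hs hts (hu.comp measurable_prodMk_left) (hv.comp measurable_prodMk_left)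
      (hw.comp measurable_prodMk_left) fun x' y' => h (x, x') (y, y')

lemma PrekopaLeindler.of_measurePreserving {μ : Measure E} {ν : Measure F}
    (hμ : PrekopaLeindler 0 μ) (L : E →ₗ[ℝ] F) (hL : MeasurePreserving L μ ν) :
    PrekopaLeindler 0 ν := by
  rw [prekopaLeindler_zero_iff] at *
  intro t s ht hs hts u v w hu hv hw h
  rw [← hL.lintegral_comp hu, ← hL.lintegral_comp hv, ← hL.lintegral_comp hw]
  refine hμ ht hs hts (hu.comp hL.measurable) (hv.comp hL.measurable) (hw.comp hL.measurable)
    fun x y => ?_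
  simpa using h (L x) (L y)

lemma prekopaLeindler_volume_pi (n : ℕ) :
    PrekopaLeindler 0 (volume : Measure (Fin n → ℝ)) := by
  induction n with
  | zero =>
    rw [prekopaLeindler_zero_iff, volume_pi, Measure.pi_of_empty _ 0]
    intro t s _ _ _ u v w _ _ _ h
    simpa using h 0 0
  | succ n ih =>
    refine (prekopaLeindler_volume_real.prod ih).of_measurePreserving
      (Fin.consLinearEquiv ℝ fun _ : Fin (n + 1) => ℝ).toLinearMap ?_
    have hcons : ⇑(Fin.consLinearEquiv ℝ fun _ : Fin (n + 1) => ℝ).toLinearMap =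
        (MeasurableEquiv.piFinSuccAbove (fun _ : Fin (n + 1) => ℝ) 0).symm := by
      ext p i
      simp
    rw [hcons]
    exact (volume_preserving_piFinSuccAbove (fun _ : Fin (n + 1) => ℝ) 0).symm

theorem prekopaLeindler_volume (E : Type*) [NormedAddCommGroup E] [InnerProductSpace ℝ E]
    [FiniteDimensional ℝ E] [MeasurableSpace E] [BorelSpace E] :
    PrekopaLeindler 0 (volume : Measure E) :=
  (prekopaLeindler_volume_pi _).of_measurePreserving
    ((WithLp.linearEquiv 2 ℝ _).symm.trans
      (stdOrthonormalBasis ℝ E).repr.symm.toLinearEquiv).toLinearMap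
    ((stdOrthonormalBasis ℝ E).measurePreserving_repr_symm.comp (PiLp.volume_preserving_toLp _))

theorem PrekopaLeindler.tilted_neg {μ : Measure E} {κ K : ℝ} (hμ : PrekopaLeindler κ μ)
    {H : E → ℝ} (hH_meas : Measurable H) (hH : StrongConvexOn univ K H) :
    PrekopaLeindler (κ + K) (μ.tilted fun x => -H x) := by
  intro t s ht hs hts u v w hu hv hw h
  simp only [lintegral_tilted]
  set Z := ∫ x, Real.exp (-H x) ∂μ
  have hZ : 0 ≤ Z := integral_nonneg fun x => (Real.exp_pos _).le
  have hdens : ∀ x, 0 ≤ Real.exp (-H x) / Z := fun x => by positivity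
  refine hμ ht hs hts (by fun_prop) (by fun_prop) (by fun_prop) fun x y => ?_
  calc (ENNReal.ofReal (Real.exp (-H x) / Z) * u x) ^ t *
        (ENNReal.ofReal (Real.exp (-H y) / Z) * v y) ^ s
      = ENNReal.ofReal ((Real.exp (-H x) / Z) ^ t * (Real.exp (-H y) / Z) ^ s) *
          (u x ^ t * v y ^ s) := by
        rw [ENNReal.mul_rpow_of_nonneg _ _ ht.le, ENNReal.mul_rpow_of_nonneg _ _ hs.le,
          ENNReal.ofReal_rpow_of_nonneg (hdens x) ht.le,
          ENNReal.ofReal_rpow_of_nonneg (hdens y) hs.le, mul_mul_mul_comm,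
          ENNReal.ofReal_mul (by positivity)]
    _ ≤ ENNReal.ofReal (Real.exp (-(t * s * (K / 2 * ‖x - y‖ ^ 2))) *
            (Real.exp (-H (t • x + s • y)) / Z)) *
          (ENNReal.ofReal (Real.exp (t * s * ((κ + K) / 2 * ‖x - y‖ ^ 2))) *
            w (t • x + s • y)) := by
        gcongr ENNReal.ofReal ?_ * ?_
        exacts [exp_neg_div_rpow_mul_rpow_le_of_strongConvexOn hH ht.le hs.le hts hZ x y, h x y]
    _ = ENNReal.ofReal (Real.exp (t * s * (κ / 2 * ‖x - y‖ ^ 2))) *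
          (ENNReal.ofReal (Real.exp (-H (t • x + s • y)) / Z) * w (t • x + s • y)) := by
        have hexp : t * s * (κ / 2 * ‖x - y‖ ^ 2) =
            -(t * s * (K / 2 * ‖x - y‖ ^ 2)) + t * s * ((κ + K) / 2 * ‖x - y‖ ^ 2) := by ring
        rw [hexp, Real.exp_add, ENNReal.ofReal_mul (by positivity),
          ENNReal.ofReal_mul (by positivity)]
        ring

end PrekopaLeindler

/-! ### Second-order bounds -/

lemma strongConvexOn_univ_of_hasDerivAt2 {c : ℝ} {φ φ' φ'' : ℝ → ℝ}
    (hφ : ∀ r, HasDerivAt φ (φ' r) r) (hφ' : ∀ r, HasDerivAt φ' (φ'' r) r)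
    (hc : ∀ r, c ≤ φ'' r) : StrongConvexOn univ c φ := by
  have hsub : ∀ r, HasDerivAt (fun r => φ r - c / 2 * ‖r‖ ^ 2) (φ' r - c * r) r := fun r => by
    simp only [Real.norm_eq_abs, sq_abs]
    exact ((hφ r).fun_sub ((hasDerivAt_pow 2 r).const_mul (c / 2))).congr_deriv (by ring)
  have hsub' : ∀ r, HasDerivAt (fun r => φ' r - c * r) (φ'' r - c) r := fun r => by
    simpa using (hφ' r).fun_sub ((hasDerivAt_id r).const_mul c)
  exact strongConvexOn_iff_convex.2 <| convexOn_of_hasDerivWithinAt2_nonneg convex_univ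
    (fun r _ => (hsub r).continuousAt.continuousWithinAt)
    (fun r _ => (hsub r).hasDerivWithinAt) (fun r _ => (hsub' r).hasDerivWithinAt)
    (fun r _ => sub_nonneg.2 (hc r))

section NormedSpace

variable {E : Type*} [NormedAddCommGroup E] [NormedSpace ℝ E]

theorem strongConvexOn_univ_of_le_fderiv_fderiv {K : ℝ} {H : E → ℝ} (hH : ContDiff ℝ 2 H)
    (hconv : ∀ x v : E, K * ‖v‖ ^ 2 ≤ fderiv ℝ (fderiv ℝ H) x v v) :
    StrongConvexOn univ K H := by
  have hH' : Differentiable ℝ (fderiv ℝ H) :=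
    (hH.fderiv_right (m := 1) (by norm_num)).differentiable one_ne_zero
  refine ⟨convex_univ, fun x _ y _ a b ha hb hab => ?_⟩
  set v := y - x
  have hline : ∀ r : ℝ, HasDerivAt (fun r : ℝ => x + r • v) v r := fun r => by
    simpa using ((hasDerivAt_id r).smul_const v).const_add x
  have hφ : ∀ r : ℝ, HasDerivAt (fun r : ℝ => H (x + r • v)) (fderiv ℝ H (x + r • v) v) r :=
    fun r => ((hH.differentiable two_ne_zero _).hasFDerivAt).comp_hasDerivAt r (hline r)
  have hφ' : ∀ r : ℝ, HasDerivAt (fun r : ℝ => fderiv ℝ H (x + r • v) v)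
      (fderiv ℝ (fderiv ℝ H) (x + r • v) v v) r := fun r => by
    simpa using (((hH' _).hasFDerivAt).comp_hasDerivAt r (hline r)).clm_apply (hasDerivAt_const r v)
  have hseg := (strongConvexOn_univ_of_hasDerivAt2 hφ hφ' fun r => hconv _ v).2
    (mem_univ 0) (mem_univ 1) ha hb hab
  have hpoint : x + b • v = a • x + b • y := by
    simp only [v, eq_sub_of_add_eq hab]
    module
  have hend : x + v = y := add_sub_cancel x y
  simp only [smul_eq_mul, mul_zero, mul_one, zero_add, zero_smul, add_zero, one_smul, zero_sub,
    norm_neg, norm_one, one_pow, hpoint, hend] at hseg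
  rw [norm_sub_rev x y]
  simp only [smul_eq_mul]
  linarith

lemma le_add_norm_fderiv_mul_add_of_lipschitzWith {g : E → ℝ} (hg : Differentiable ℝ g)
    {L : ℝ≥0} (hL : LipschitzWith L (fderiv ℝ g)) (x z : E) :
    g x ≤ g z + ‖fderiv ℝ g z‖ * ‖x - z‖ + L * ‖x - z‖ ^ 2 := by
  have htaylor : ‖g x - g z - fderiv ℝ g z (x - z)‖ ≤ L * ‖x - z‖ * ‖x - z‖ := by
    refine (convex_segment z x).norm_image_sub_le_of_norm_hasFDerivWithin_le'
      (fun y _ => (hg y).hasFDerivAt.hasFDerivWithinAt) (fun y hy => ?_)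
      (left_mem_segment ℝ z x) (right_mem_segment ℝ z x)
    calc ‖fderiv ℝ g y - fderiv ℝ g z‖ ≤ L * ‖y - z‖ := hL.norm_sub_le y z
      _ ≤ L * ‖x - z‖ := by
        gcongr
        exact norm_sub_le_of_mem_segment hy
  have hlinear := (le_abs_self _).trans ((fderiv ℝ g z).le_opNorm (x - z))
  nlinarith [(le_abs_self _).trans htaylor]

end NormedSpace

/-! ### The exponential form of the logarithmic Sobolev inequality -/

open ProbabilityTheory

lemma le_integral_of_eventually_mul_le_cgf {Ω : Type*} [MeasurableSpace Ω] {μ : Measure Ω}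
    [IsProbabilityMeasure μ] {X : Ω → ℝ} (hX : 0 ∈ interior (integrableExpSet X μ)) {c : ℝ}
    (h : ∀ᶠ s in 𝓝[>] 0, s * c ≤ cgf X μ s) : c ≤ ∫ ω, X ω ∂μ := by
  have hderiv : HasDerivAt (cgf X μ) (∫ ω, X ω ∂μ) 0 := by
    simpa [deriv_cgf_zero hX] using (analyticAt_cgf hX).differentiableAt.hasDerivAt
  refine ge_of_tendsto hderiv.tendsto_slope_zero_right ?_
  filter_upwards [h, self_mem_nhdsWithin] with s hs (hs₀ : 0 < s)
  simpa [le_inv_mul_iff₀ hs₀] using hs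

lemma zero_mem_interior_integrableExpSet_of_mem_Icc {Ω : Type*} [MeasurableSpace Ω]
    {μ : Measure Ω} [IsFiniteMeasure μ] {X : Ω → ℝ} (hX : AEMeasurable X μ) {a b : ℝ}
    (hab : ∀ᵐ ω ∂μ, X ω ∈ Icc a b) : 0 ∈ interior (integrableExpSet X μ) := by
  have huniv : integrableExpSet X μ = univ :=
    eq_univ_of_forall fun _ => integrable_exp_mul_of_mem_Icc hX hab
  simp [huniv]

lemma integrable_exp_of_continuous_of_le {E : Type*} [TopologicalSpace E] [MeasurableSpace E]
    [OpensMeasurableSpace E] {μ : Measure E} [IsFiniteMeasure μ] {φ : E → ℝ} (hφ : Continuous φ)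
    {C : ℝ} (hC : ∀ x, φ x ≤ C) : Integrable (fun x => Real.exp (φ x)) μ :=
  .of_bound hφ.rexp.aestronglyMeasurable (Real.exp C) <| .of_forall fun x => by
    simpa using hC x

section LogSobolevExp

variable {E : Type*} [NormedAddCommGroup E] [NormedSpace ℝ E]
  {g : E → ℝ} {L : ℝ≥0} {M R : ℝ}

lemma mul_apply_le_of_lipschitzWith_fderiv (hg : Differentiable ℝ g)
    (hL : LipschitzWith L (fderiv ℝ g)) {K k t s : ℝ} (hk : 0 < k) (ht : 0 < t) (hs : 0 < s)
    (hts : t + s = 1) (hkK : k + 2 * L * s ≤ K) (x y : E) :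
    t * g x ≤ t * s * (K / 2 * ‖x - y‖ ^ 2) +
      (t * g (t • x + s • y) + s / (2 * k) * ‖fderiv ℝ g (t • x + s • y)‖ ^ 2) := by
  have htaylor := le_add_norm_fderiv_mul_add_of_lipschitzWith hg hL x (t • x + s • y)
  have hdist : ‖x - (t • x + s • y)‖ = s * ‖x - y‖ := by
    rw [← norm_smul_of_nonneg hs.le, eq_sub_of_add_eq hts]
    congr 1
    module
  rw [hdist] at htaylor
  set G := ‖fderiv ℝ g (t • x + s • y)‖
  set ρ := ‖x - y‖
  have hyoung : G * ρ ≤ G ^ 2 / (2 * k) + k / 2 * ρ ^ 2 := by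
    have hsq : 0 ≤ (G - k * ρ) ^ 2 / (2 * k) := by positivity
    have hexpand : (G - k * ρ) ^ 2 / (2 * k) = G ^ 2 / (2 * k) - G * ρ + k / 2 * ρ ^ 2 := by
      field
    linarith
  have hG : t * (G ^ 2 / (2 * k)) ≤ G ^ 2 / (2 * k) :=
    mul_le_of_le_one_left (by positivity) (by linarith)
  calc t * g x
      ≤ t * (g (t • x + s • y) + G * (s * ρ) + L * (s * ρ) ^ 2) := by gcongr
    _ = t * s * (G * ρ) + t * s * (2 * L * s) / 2 * ρ ^ 2 + t * g (t • x + s • y) := by ring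
    _ ≤ t * s * (G ^ 2 / (2 * k) + k / 2 * ρ ^ 2) + t * s * (K - k) / 2 * ρ ^ 2 +
          t * g (t • x + s • y) := by
        gcongr
        linarith
    _ = t * s * (K / 2 * ρ ^ 2) + (t * g (t • x + s • y) + s * (t * (G ^ 2 / (2 * k)))) := by ring
    _ ≤ t * s * (K / 2 * ρ ^ 2) + (t * g (t • x + s • y) + s * (G ^ 2 / (2 * k))) := by gcongr
    _ = t * s * (K / 2 * ρ ^ 2) + (t * g (t • x + s • y) + s / (2 * k) * G ^ 2) := by ring

variable [MeasurableSpace E] [BorelSpace E] {μ : Measure E} [IsProbabilityMeasure μ]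

lemma PrekopaLeindler.integral_exp_rpow_le {K : ℝ} (hμ : PrekopaLeindler K μ)
    (hg : Differentiable ℝ g) (hM : ∀ x, g x ≤ M) (hR : ∀ x, ‖fderiv ℝ g x‖ ≤ R)
    (hL : LipschitzWith L (fderiv ℝ g)) {k t s : ℝ} (hk : 0 < k) (ht : 0 < t) (hs : 0 < s)
    (hts : t + s = 1) (hkK : k + 2 * L * s ≤ K) :
    (∫ x, Real.exp (g x) ∂μ) ^ t ≤
      ∫ x, Real.exp (t * g x + s / (2 * k) * ‖fderiv ℝ g x‖ ^ 2) ∂μ := by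
  have hg_cont := hg.continuous
  have hg'_cont := hL.continuous
  have hu := integrable_exp_of_continuous_of_le (μ := μ) hg_cont hM
  have hw : Integrable (fun x => Real.exp (t * g x + s / (2 * k) * ‖fderiv ℝ g x‖ ^ 2)) μ :=
    integrable_exp_of_continuous_of_le (C := t * M + s / (2 * k) * R ^ 2) (by fun_prop)
      fun x => by gcongr; exacts [hM x, hR x]
  have hpl := hμ ht hs hts (u := fun x => ENNReal.ofReal (Real.exp (g x))) (v := 1)
    (w := fun x => ENNReal.ofReal (Real.exp (t * g x + s / (2 * k) * ‖fderiv ℝ g x‖ ^ 2)))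
    (by fun_prop) (by fun_prop) (by fun_prop) fun x y => by
      rw [ENNReal.ofReal_rpow_of_pos (Real.exp_pos _), ← Real.exp_mul, Pi.one_apply,
        ENNReal.one_rpow, mul_one, ← ENNReal.ofReal_mul (Real.exp_pos _).le, ← Real.exp_add]
      gcongr
      rw [mul_comm]
      exact mul_apply_le_of_lipschitzWith_fderiv hg hL hk ht hs hts hkK x y
  simp only [Pi.one_apply, lintegral_one, measure_univ, ENNReal.one_rpow, mul_one] at hpl
  rwa [← ofReal_integral_eq_lintegral_ofReal hu (.of_forall fun x => (Real.exp_pos _).le),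
    ← ofReal_integral_eq_lintegral_ofReal hw (.of_forall fun x => (Real.exp_pos _).le),
    ENNReal.ofReal_rpow_of_nonneg (integral_nonneg fun x => (Real.exp_pos _).le) ht.le,
    ENNReal.ofReal_le_ofReal_iff (integral_nonneg fun x => (Real.exp_pos _).le)] at hpl

lemma PrekopaLeindler.mul_neg_log_le_cgf {K : ℝ} (hμ : PrekopaLeindler K μ)
    (hg : Differentiable ℝ g) (hM : ∀ x, |g x| ≤ M) (hR : ∀ x, ‖fderiv ℝ g x‖ ≤ R)
    (hL : LipschitzWith L (fderiv ℝ g)) {k t s : ℝ} (hk : 0 < k) (ht : 0 < t) (hs : 0 < s)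
    (hts : t + s = 1) (hkK : k + 2 * L * s ≤ K) :
    s * -Real.log (∫ x, Real.exp (g x) ∂μ) ≤
      cgf (fun x => 1 / (2 * k) * ‖fderiv ℝ g x‖ ^ 2 - g x) (μ.tilted g) s := by
  have hM' : ∀ x, g x ≤ M := fun x => (le_abs_self _).trans (hM x)
  have hA : 0 < ∫ x, Real.exp (g x) ∂μ :=
    integral_exp_pos (integrable_exp_of_continuous_of_le hg.continuous hM')
  have hrpow := hμ.integral_exp_rpow_le hg hM' hR hL hk ht hs hts hkK
  have hlog := Real.log_le_log (by positivity) hrpow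
  have hpoint : ∀ x, g x + s * (1 / (2 * k) * ‖fderiv ℝ g x‖ ^ 2 - g x) =
      t * g x + s / (2 * k) * ‖fderiv ℝ g x‖ ^ 2 := fun x => by
    rw [eq_sub_of_add_eq hts]
    ring
  rw [Real.log_rpow hA] at hlog
  rw [cgf, mgf, integral_exp_tilted]
  simp only [Pi.add_apply, hpoint]
  rw [Real.log_div ((Real.rpow_pos_of_pos hA t).trans_le hrpow).ne' hA.ne']
  linear_combination hlog - Real.log (∫ x, Real.exp (g x) ∂μ) * hts

lemma PrekopaLeindler.integral_tilted_sub_log_le_of_lt {K : ℝ} (hμ : PrekopaLeindler K μ)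
    (hg : Differentiable ℝ g) (hM : ∀ x, |g x| ≤ M) (hR : ∀ x, ‖fderiv ℝ g x‖ ≤ R)
    (hL : LipschitzWith L (fderiv ℝ g)) {k : ℝ} (hk : 0 < k) (hkK : k < K) :
    ∫ x, g x ∂μ.tilted g - Real.log (∫ x, Real.exp (g x) ∂μ) ≤
      1 / (2 * k) * ∫ x, ‖fderiv ℝ g x‖ ^ 2 ∂μ.tilted g := by
  have hg_cont := hg.continuous
  have hg'_cont := hL.continuous
  have hexp : Integrable (fun x => Real.exp (g x)) μ :=
    integrable_exp_of_continuous_of_le hg_cont fun x => (le_abs_self _).trans (hM x)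
  have := isProbabilityMeasure_tilted hexp
  have hg_int : Integrable g (μ.tilted g) :=
    .of_bound hg_cont.aestronglyMeasurable M (.of_forall hM)
  have hg'_int : Integrable (fun x => ‖fderiv ℝ g x‖ ^ 2) (μ.tilted g) :=
    .of_bound (hg'_cont.norm.pow 2).aestronglyMeasurable (R ^ 2) <| .of_forall fun x => by
      rw [norm_pow, norm_norm]
      gcongr
      exact hR x
  have hg'_bound : ∀ x, 1 / (2 * k) * ‖fderiv ℝ g x‖ ^ 2 ∈ Icc 0 (1 / (2 * k) * R ^ 2) :=
    fun x => ⟨by positivity, by gcongr; exact hR x⟩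
  have hX : 0 ∈ interior
      (integrableExpSet (fun x => 1 / (2 * k) * ‖fderiv ℝ g x‖ ^ 2 - g x) (μ.tilted g)) :=
    zero_mem_interior_integrableExpSet_of_mem_Icc (a := 0 - M) (b := 1 / (2 * k) * R ^ 2 - -M)
      (by fun_prop) <| .of_forall fun x =>
        ⟨sub_le_sub (hg'_bound x).1 (abs_le.1 (hM x)).2,
          sub_le_sub (hg'_bound x).2 (abs_le.1 (hM x)).1⟩
  have hsmall : ∀ᶠ s : ℝ in 𝓝[>] 0, k + 2 * L * s < K :=
    (ContinuousAt.eventually_lt (by fun_prop) continuousAt_const (by simpa)).filter_mono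
      nhdsWithin_le_nhds
  have hcgf : ∀ᶠ s in 𝓝[>] 0, s * -Real.log (∫ x, Real.exp (g x) ∂μ) ≤
      cgf (fun x => 1 / (2 * k) * ‖fderiv ℝ g x‖ ^ 2 - g x) (μ.tilted g) s := by
    filter_upwards [hsmall, Ioo_mem_nhdsGT one_pos] with s hs hs'
    exact hμ.mul_neg_log_le_cgf hg hM hR hL hk (sub_pos.2 hs'.2) hs'.1 (sub_add_cancel 1 s) hs.le
  have hlog := le_integral_of_eventually_mul_le_cgf hX hcgf
  rw [integral_sub (hg'_int.const_mul _) hg_int, integral_const_mul] at hlog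
  linarith

theorem PrekopaLeindler.integral_tilted_sub_log_le {K : ℝ} (hK : 0 < K)
    (hμ : PrekopaLeindler K μ) (hg : Differentiable ℝ g) (hM : ∀ x, |g x| ≤ M)
    (hR : ∀ x, ‖fderiv ℝ g x‖ ≤ R) (hL : LipschitzWith L (fderiv ℝ g)) :
    ∫ x, g x ∂μ.tilted g - Real.log (∫ x, Real.exp (g x) ∂μ) ≤
      1 / (2 * K) * ∫ x, ‖fderiv ℝ g x‖ ^ 2 ∂μ.tilted g := by
  have hlim : ContinuousAt (fun k => 1 / (2 * k) * ∫ x, ‖fderiv ℝ g x‖ ^ 2 ∂μ.tilted g) K := by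
    fun_prop (disch := positivity)
  refine ge_of_tendsto (hlim.mono_left (nhdsWithin_le_nhds (s := Iio K))) ?_
  filter_upwards [Ioo_mem_nhdsLT hK] with k hk
  exact hμ.integral_tilted_sub_log_le_of_lt hg hM hR hL hk.1 hk.2

/-- The entropy of `φ` with respect to `μ`, not assuming that `φ` integrates to one. -/
def entropy {α : Type*} [MeasurableSpace α] (μ : Measure α) (φ : α → ℝ) : ℝ :=
  ∫ x, φ x * Real.log (φ x) ∂μ - (∫ x, φ x ∂μ) * Real.log (∫ x, φ x ∂μ)

lemma integral_exp_mul_integral_tilted {α : Type*} [MeasurableSpace α] {μ : Measure α}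
    [NeZero μ] {g : α → ℝ} (hg : Integrable (fun x => Real.exp (g x)) μ) (φ : α → ℝ) :
    (∫ x, Real.exp (g x) ∂μ) * ∫ x, φ x ∂μ.tilted g = ∫ x, φ x * Real.exp (g x) ∂μ := by
  have hA := (integral_exp_pos hg).ne'
  rw [integral_tilted, ← integral_const_mul]
  simp only [smul_eq_mul]
  congr with x
  field

theorem PrekopaLeindler.entropy_exp_le {K : ℝ} (hK : 0 < K) (hμ : PrekopaLeindler K μ)
    (hg : Differentiable ℝ g) (hM : ∀ x, |g x| ≤ M) (hR : ∀ x, ‖fderiv ℝ g x‖ ≤ R)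
    (hL : LipschitzWith L (fderiv ℝ g)) :
    entropy μ (fun x => Real.exp (g x)) ≤
      1 / (2 * K) * ∫ x, ‖fderiv ℝ g x‖ ^ 2 * Real.exp (g x) ∂μ := by
  have hexp : Integrable (fun x => Real.exp (g x)) μ :=
    integrable_exp_of_continuous_of_le hg.continuous fun x => (le_abs_self _).trans (hM x)
  have hlsi := mul_le_mul_of_nonneg_left (hμ.integral_tilted_sub_log_le hK hg hM hR hL)
    (integral_exp_pos hexp).le
  rw [mul_sub, mul_left_comm, integral_exp_mul_integral_tilted hexp,
    integral_exp_mul_integral_tilted hexp] at hlsi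
  simpa only [entropy, Real.log_exp, mul_comm (Real.exp _) (g _)] using hlsi

theorem PrekopaLeindler.entropy_exp_le_of_hasCompactSupport {K : ℝ} (hK : 0 < K)
    (hμ : PrekopaLeindler K μ) (hg : ContDiff ℝ 2 g) {c : ℝ}
    (hg_supp : HasCompactSupport fun x => g x - c) :
    entropy μ (fun x => Real.exp (g x)) ≤
      1 / (2 * K) * ∫ x, ‖fderiv ℝ g x‖ ^ 2 * Real.exp (g x) ∂μ := by
  have hg'_supp : HasCompactSupport (fderiv ℝ g) := by
    simpa only [funext fun x => fderiv_sub_const (𝕜 := ℝ) (f := g) (x := x) c]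
      using hg_supp.fderiv ℝ
  obtain ⟨C, hC⟩ := (hg.continuous.sub continuous_const).bounded_above_of_compact_support hg_supp
  have hM : ∀ x, |g x| ≤ C + |c| := fun x => by
    rw [← sub_le_iff_le_add]
    exact (abs_sub_abs_le_abs_sub _ _).trans (hC x)
  obtain ⟨R, hR⟩ := (hg.continuous_fderiv two_ne_zero).bounded_above_of_compact_support hg'_supp
  obtain ⟨L, hL⟩ := ContDiff.lipschitzWith_of_hasCompactSupport hg'_supp
    (hg.fderiv_right (m := 1) (by norm_num)) one_ne_zero
  exact hμ.entropy_exp_le hK (hg.differentiable two_ne_zero) hM hR hL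

end LogSobolevExp

/-! ### Functions of compact support -/

lemma mul_log_add_mul_log_le {x y : ℝ} (hx : 0 ≤ x) (hy : 0 < y) :
    x * Real.log x + y * Real.log y ≤ (x + y) * Real.log (x + y) := by
  have hxy : x * Real.log x ≤ x * Real.log (x + y) := by
    rcases hx.eq_or_lt with rfl | hx
    · simp
    · gcongr
      linarith
  have hyx : y * Real.log y ≤ y * Real.log (x + y) := by
    gcongr
    linarith
  linarith

lemma integrable_mul_log_of_mem_Icc {α : Type*} [MeasurableSpace α] {μ : Measure α}
    [IsFiniteMeasure μ] {φ : α → ℝ} (hφ : AEStronglyMeasurable φ μ) {a b : ℝ}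
    (hab : ∀ x, φ x ∈ Icc a b) : Integrable (fun x => φ x * Real.log (φ x)) μ := by
  obtain ⟨C, hC⟩ := isCompact_Icc.exists_bound_of_continuousOn
    (Real.continuous_mul_log.continuousOn (s := Icc a b))
  exact .of_bound (Real.continuous_mul_log.comp_aestronglyMeasurable hφ) C
    (.of_forall fun x => hC _ (hab x))

lemma entropy_le_of_forall_entropy_add_le {α : Type*} [MeasurableSpace α] {μ : Measure α}
    [IsProbabilityMeasure μ] {φ : α → ℝ} (hφ : AEStronglyMeasurable φ μ) {b c : ℝ}
    (hb : ∀ x, φ x ∈ Icc 0 b) (h : ∀ ε > 0, entropy μ (fun x => φ x + ε) ≤ c) :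
    entropy μ φ ≤ c := by
  have hφ_int : Integrable φ μ := .of_bound hφ b <| .of_forall fun x => by
    simpa [abs_of_nonneg (hb x).1] using (hb x).2
  have hφ_log := integrable_mul_log_of_mem_Icc hφ hb
  set I := ∫ x, φ x ∂μ
  have hbound : ∀ ε > 0, ∫ x, φ x * Real.log (φ x) ∂μ ≤
      c + (I + ε) * Real.log (I + ε) - ε * Real.log ε := fun ε hε => by
    have hε_log := integrable_mul_log_of_mem_Icc (μ := μ) (hφ.add aestronglyMeasurable_const)
      fun x => ⟨add_le_add_left (hb x).1 ε, add_le_add_left (hb x).2 ε⟩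
    have hadd := integral_mono (hφ_log.add (integrable_const (ε * Real.log ε))) hε_log
      fun x => mul_log_add_mul_log_le (hb x).1 hε
    have hent := h ε hε
    simp only [Pi.add_apply] at hadd
    rw [integral_add hφ_log (integrable_const _), integral_const, probReal_univ, one_smul] at hadd
    rw [entropy, integral_add hφ_int (integrable_const _), integral_const, probReal_univ,
      one_smul] at hent
    linarith
  have hlim : Continuous fun ε => c + (I + ε) * Real.log (I + ε) - ε * Real.log ε := by fun_prop
  have hlim₀ := ge_of_tendsto ((hlim.tendsto 0).mono_left (nhdsWithin_le_nhds (s := Ioi 0)))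
    (eventually_mem_nhdsWithin.mono hbound)
  rw [entropy, sub_le_iff_le_add]
  simpa using hlim₀

lemma hasCompactSupport_log_sq_add_sub_log {α : Type*} [TopologicalSpace α] {f : α → ℝ}
    (hf : HasCompactSupport f) (ε : ℝ) :
    HasCompactSupport fun x => Real.log (f x ^ 2 + ε) - Real.log ε :=
  hf.comp_left (g := fun y => Real.log (y ^ 2 + ε) - Real.log ε) (by simp)

section CompactSupport

variable {E : Type*} [NormedAddCommGroup E] [NormedSpace ℝ E] {f : E → ℝ} {ε : ℝ}

lemma norm_fderiv_log_sq_add_sq_mul_le {x : E} (hf : DifferentiableAt ℝ f x) (hε : 0 < ε) :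
    ‖fderiv ℝ (fun y => Real.log (f y ^ 2 + ε)) x‖ ^ 2 * (f x ^ 2 + ε) ≤
      4 * ‖fderiv ℝ f x‖ ^ 2 := by
  have hpos : 0 < f x ^ 2 + ε := by positivity
  have hderiv := ((hf.hasFDerivAt.pow 2).add_const ε).log hpos.ne'
  rw [hderiv.fderiv, smul_smul, norm_smul, mul_pow, Real.norm_eq_abs, sq_abs]
  have hcoef : ((f x ^ 2 + ε)⁻¹ * (2 • f x ^ (2 - 1))) ^ 2 * (f x ^ 2 + ε) ≤ 4 := by
    calc ((f x ^ 2 + ε)⁻¹ * (2 • f x ^ (2 - 1))) ^ 2 * (f x ^ 2 + ε)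
        = 4 * (f x ^ 2 / (f x ^ 2 + ε)) := by
          simp only [nsmul_eq_mul]
          push_cast
          field
      _ ≤ 4 * 1 := by
          gcongr
          exact div_le_one_of_le₀ (by linarith) hpos.le
      _ = 4 := mul_one 4
  rw [mul_right_comm]
  gcongr

variable [MeasurableSpace E] [BorelSpace E] {μ : Measure E} [IsProbabilityMeasure μ]

theorem PrekopaLeindler.entropy_sq_add_le {K : ℝ} (hK : 0 < K) (hμ : PrekopaLeindler K μ)
    (hf : ContDiff ℝ 2 f) (hf_supp : HasCompactSupport f) (hε : 0 < ε) :
    entropy μ (fun x => f x ^ 2 + ε) ≤ 2 / K * ∫ x, ‖fderiv ℝ f x‖ ^ 2 ∂μ := by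
  have hpos : ∀ x, 0 < f x ^ 2 + ε := fun x => by positivity
  have hlsi := hμ.entropy_exp_le_of_hasCompactSupport hK
    (((hf.pow 2).add contDiff_const).log fun x => (hpos x).ne')
    (hasCompactSupport_log_sq_add_sub_log hf_supp ε)
  simp only [Real.exp_log (hpos _)] at hlsi
  have hf'_cont : Continuous fun x => ‖fderiv ℝ f x‖ ^ 2 :=
    (hf.continuous_fderiv two_ne_zero).norm.pow 2
  have hf'_supp : HasCompactSupport fun x => ‖fderiv ℝ f x‖ ^ 2 :=
    (hf_supp.fderiv ℝ).norm.comp_left (zero_pow two_ne_zero)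
  calc entropy μ (fun x => f x ^ 2 + ε)
      ≤ 1 / (2 * K) *
          ∫ x, ‖fderiv ℝ (fun y => Real.log (f y ^ 2 + ε)) x‖ ^ 2 * (f x ^ 2 + ε) ∂μ := hlsi
    _ ≤ 1 / (2 * K) * ∫ x, 4 * ‖fderiv ℝ f x‖ ^ 2 ∂μ := by
        refine mul_le_mul_of_nonneg_left ?_ (by positivity)
        exact integral_mono_of_nonneg (.of_forall fun x => by have := hpos x; positivity)
          ((hf'_cont.integrable_of_hasCompactSupport hf'_supp).const_mul 4)
          (.of_forall fun x =>
            norm_fderiv_log_sq_add_sq_mul_le (hf.differentiable two_ne_zero x) hε)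
    _ = 2 / K * ∫ x, ‖fderiv ℝ f x‖ ^ 2 ∂μ := by
        rw [integral_const_mul]
        field

theorem PrekopaLeindler.entropy_sq_le {K : ℝ} (hK : 0 < K) (hμ : PrekopaLeindler K μ)
    (hf : ContDiff ℝ 2 f) (hf_supp : HasCompactSupport f) :
    entropy μ (fun x => f x ^ 2) ≤ 2 / K * ∫ x, ‖fderiv ℝ f x‖ ^ 2 ∂μ := by
  obtain ⟨C, hC⟩ := hf.continuous.bounded_above_of_compact_support hf_supp
  have hsq : ∀ x, f x ^ 2 ∈ Icc 0 (C ^ 2) := fun x =>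
    ⟨sq_nonneg _, sq_le_sq.2 ((hC x).trans (le_abs_self C))⟩
  exact entropy_le_of_forall_entropy_add_le (hf.continuous.pow 2).aestronglyMeasurable hsq
    fun ε hε => hμ.entropy_sq_add_le hK hf hf_supp hε

end CompactSupport

/-! ### Strongly log-concave measures -/

theorem bakry_emery_log_sobolev_general {E : Type*} [NormedAddCommGroup E]
    [InnerProductSpace ℝ E] [FiniteDimensional ℝ E] [MeasurableSpace E] [BorelSpace E]
    {K : ℝ} (hK : 0 < K) {H : E → ℝ} (hH : StrongConvexOn univ K H)
    (hH_int : Integrable fun x => Real.exp (-H x)) {f : E → ℝ} (hf : ContDiff ℝ 2 f)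
    (hf_supp : HasCompactSupport f) :
    entropy (volume.tilted fun x => -H x) (fun x => f x ^ 2) ≤
      2 / K * ∫ x, ‖gradient f x‖ ^ 2 ∂volume.tilted fun x => -H x := by
  have hH_convex : ConvexOn ℝ univ H := UniformConvexOn.convexOn hH fun r => by positivity
  have hH_cont : Continuous H := continuousOn_univ.1 (hH_convex.continuousOn isOpen_univ)
  have := isProbabilityMeasure_tilted hH_int
  have hpl : PrekopaLeindler K (volume.tilted fun x => -H x) := by
    simpa using (prekopaLeindler_volume E).tilted_neg hH_cont.measurable hH
  simpa [gradient] using hpl.entropy_sq_le hK hf hf_supp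

/-- Bakry–Émery logarithmic Sobolev inequality for a Gibbs measure with uniformly convex
Hamiltonian: if `D²H ≥ K > 0`, then for every smooth compactly supported `f` normalized in
`L²(μ)`, the entropy of `f²` is at most `(2/K)` times the Dirichlet form of `f`. -/
theorem bakry_emery_log_sobolev (m : ℕ) (K : ℝ) (hK : 0 < K)
    (H : EuclideanSpace ℝ (Fin m) → ℝ) (hH : ContDiff ℝ 2 H)
    (hconv : ∀ x v : EuclideanSpace ℝ (Fin m), K * ‖v‖ ^ 2 ≤ fderiv ℝ (fderiv ℝ H) x v v)
    (hint : Integrable fun x => Real.exp (-H x))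
    (μ : Measure (EuclideanSpace ℝ (Fin m)))
    (hμ : μ = volume.withDensity fun x =>
      ENNReal.ofReal (Real.exp (-H x) / ∫ x', Real.exp (-H x')))
    (f : EuclideanSpace ℝ (Fin m) → ℝ)
    (hf : ContDiff ℝ (⊤ : ℕ∞) f) (hfsupp : HasCompactSupport f)
    (hfnorm : ∫ x, f x ^ 2 ∂μ = 1) :
    ∫ x, f x ^ 2 * Real.log (f x ^ 2) ∂μ ≤ (2 / K) * ∫ x, ‖gradient f x‖ ^ 2 ∂μ := by
  obtain rfl : μ = volume.tilted fun x => -H x := hμ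
  simpa [entropy, hfnorm] using bakry_emery_log_sobolev_general hK
    (strongConvexOn_univ_of_le_fderiv_fderiv hH hconv) hint (contDiff_infty.1 hf 2) hfsupp
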